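/- Let A be an N×d real matrix satisfying condition (A₂) with parameter m, let η := min_{S⊆[N],|S|=m} min_{‖x‖=1} (1/N)(Σ_{j∈Sᶜ}|a_jᵀx| − Σ_{j∈S}|a_jᵀx|) (which is positive), Ā := max_{j∈[N]}‖a_j‖, and K := 2mĀ/(Nη) + 1. Let 𝒜 ⊆ [N] with |𝒜| = m. Let 𝒳 ⊆ ℝ^d be nonempty, compact, and convex with μ ∈ 𝒳 and x_0 ∈ 𝒳; set D := max_{x∈𝒳}‖x − x_0‖ and let Π_𝒳 denote the Euclidean metric projection onto 𝒳. Let (α_t)_{t≥0} be positive reals and (y_t)_{t≥0} an arbitrary sequence in ℝ^N, and define recursively x_{t+1} := Π_𝒳( x_t + (α_t/N)·Σ_{j∈[N]} sign(y_t(j) − a_jᵀx_t)·a_j ). Let f(x) := (1/N)·Σ_{j∈[N]} |a_jᵀ(x − μ)|. Then for all 0 ≤ k ≤ n, writing x̃ := (Σ_{t=k}^n α_t·x_t)/(Σ_{t=k}^n α_t), one has (Σ_{t=k}^n α_t)·f(x̃) ≤ K·( 2D² + Σ_{t=k}^n [ (2α_t/N)·Σ_{j∈𝒜ᶜ}|y_t(j)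 − a_jᵀμ| + α_t²·Ā²/2 ] ). -/

import Mathlib

/-!
Put `v_t = x_t - μ`, `e_t(j) = y_t(j) - ⟪a_j, μ⟫` and
`G(v) = (1/N) (∑_{j ∉ 𝒜} |⟪a_j, v⟫| - ∑_{j ∈ 𝒜} |⟪a_j, v⟫|)`. By homogeneity `G(v) ≥ η ‖v‖`, and
`η > 0` because the minimum is attained and (A₂) holds.

Projecting onto `𝒳` does not increase the distance to `μ ∈ 𝒳` (`norm_proj_sub_le`), so expanding
the square of one step gives
`‖v_{t+1}‖² ≤ ‖v_t‖² + (2 α_t / N) ∑_j sign(y_t(j) - ⟪a_j, x_t⟫) ⟪a_j, v_t⟫ + α_t² Ā²`.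
Each summand is at most `|⟪a_j, v_t⟫|`, used for `j ∈ 𝒜`, and at most
`2 |e_t(j)| - |⟪a_j, v_t⟫|` (`sign_sub_mul_le`), used for `j ∉ 𝒜`. Hence
`α_t G(v_t) ≤ (‖v_t‖² - ‖v_{t+1}‖²) / 2 + (2 α_t / N) ∑_{j ∉ 𝒜} |e_t(j)| + α_t² Ā² / 2`,
which telescopes; and `‖v_k‖ ≤ 2 D` since `x_k` and `μ` lie within `D` of `x_0`.

Finally `f(x_t) = G(v_t) + (2/N) ∑_{j ∈ 𝒜} |⟪a_j, v_t⟫| ≤ G(v_t) + (2 m Ā / N) ‖v_t‖ ≤ K G(v_t)`,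
and convexity of `f` bounds `(∑ α_t) f(x̃)` by `∑ α_t f(x_t)`.
-/

open Finset RealInnerProductSpace

lemma sign_mul_le_abs (r v : ℝ) : Real.sign r * v ≤ |v| := by
  rcases Real.sign_apply_eq r with h | h | h <;> rw [h] <;>
    [(have := neg_le_abs v; linarith); (have := abs_nonneg v; linarith);
      (have := le_abs_self v; linarith)]

/-- With residual `e - v`, the subgradient term pushes `v` towards `0` up to the noise `e`. -/
lemma sign_sub_mul_le (e v : ℝ) : Real.sign (e - v) * v ≤ 2 * |e| - |v| := by
  have h1 : Real.sign (e - v) * (e - v) = |e - v| := by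
    rcases lt_trichotomy (e - v) 0 with h | h | h
    · rw [Real.sign_of_neg h, abs_of_neg h]; ring
    · rw [h]; simp
    · rw [Real.sign_of_pos h, abs_of_pos h]; ring
  have h2 := sign_mul_le_abs (e - v) e
  have h3 : |v| ≤ |e| + |e - v| := by
    have := abs_sub e (e - v)
    simpa using this
  nlinarith

/-- A metric projection onto a convex set does not increase the distance to points of the set. -/
lemma norm_proj_sub_le {E : Type*} [NormedAddCommGroup E] [InnerProductSpace ℝ E]
    {s : Set E} (hs : Convex ℝ s) {z p w : E} (hp : p ∈ s)
    (hmin : ∀ u ∈ s, ‖z - p‖ ≤ ‖z - u‖) (hw : w ∈ s) :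
    ‖p - w‖ ≤ ‖z - w‖ := by
  have hinf : ‖z - p‖ = ⨅ u : s, ‖z - u‖ := by
    have : Nonempty s := ⟨⟨p, hp⟩⟩
    apply le_antisymm
    · exact le_ciInf fun u => hmin u u.2
    · exact ciInf_le (f := fun u : s => ‖z - u‖)
        ⟨0, by rintro _ ⟨u, rfl⟩; exact norm_nonneg _⟩ ⟨p, hp⟩
  have h := (norm_eq_iInf_iff_real_inner_le_zero hs hp).1 hinf w hw
  have h2 := norm_sub_sq_real (z - p) (w - p)
  rw [sub_sub_sub_cancel_right] at h2
  rw [norm_sub_rev p w]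
  apply le_of_sq_le_sq _ (norm_nonneg _)
  nlinarith [sq_nonneg ‖z - p‖]

/-- finite-time bound for the projected subgradient recursion
`x_{t+1} = Π_𝒳(x_t + (α_t/N) ∑_j sign(y_t(j) - a_jᵀx_t) a_j)` under condition (A₂):
for `0 ≤ k ≤ n` and `x̃ = (∑_{t=k}^n α_t x_t)/(∑_{t=k}^n α_t)`,
`(∑_{t=k}^n α_t) f(x̃) ≤ K(2D² + ∑_{t=k}^n [(2α_t/N)∑_{j∈𝒜ᶜ}|y_t(j) - a_jᵀμ| + α_t²Ā²/2])`,
where `f(x) = (1/N)∑_j |a_jᵀ(x - μ)|`, `K = 2mĀ/(Nη) + 1`. -/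
theorem stmt_15 (N d : ℕ) (hN : 1 ≤ N) (hd : 1 ≤ d)
    (a : Fin N → EuclideanSpace ℝ (Fin d)) (m : ℕ) (hm : m ≤ N)
    (hA2 : ∀ x : EuclideanSpace ℝ (Fin d), x ≠ 0 →
      ∀ S : Finset (Fin N), S.card = m →
        ∑ j ∈ S, |(⟪a j, x⟫ : ℝ)| < ∑ j ∈ Sᶜ, |(⟪a j, x⟫ : ℝ)|)
    (η : ℝ)
    (hη : IsLeast {c : ℝ | ∃ S : Finset (Fin N), S.card = m ∧
      ∃ x : EuclideanSpace ℝ (Fin d), ‖x‖ = 1 ∧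
        c = (1 / N) * (∑ j ∈ Sᶜ, |(⟪a j, x⟫ : ℝ)| - ∑ j ∈ S, |(⟪a j, x⟫ : ℝ)|)} η)
    (Abar : ℝ) (hAbar : IsGreatest (Set.range fun j => ‖a j‖) Abar)
    (K : ℝ) (hK : K = 2 * m * Abar / (N * η) + 1)
    (𝒜 : Finset (Fin N)) (h𝒜 : 𝒜.card = m)
    (𝒳 : Set (EuclideanSpace ℝ (Fin d))) (h𝒳ne : 𝒳.Nonempty)
    (h𝒳cpt : IsCompact 𝒳) (h𝒳conv : Convex ℝ 𝒳)
    (μ : EuclideanSpace ℝ (Fin d)) (hμ : μ ∈ 𝒳)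
    (x₀ : EuclideanSpace ℝ (Fin d)) (hx₀ : x₀ ∈ 𝒳)
    (D : ℝ) (hD : IsGreatest ((fun p => ‖p - x₀‖) '' 𝒳) D)
    (proj : EuclideanSpace ℝ (Fin d) → EuclideanSpace ℝ (Fin d))
    (hproj : ∀ z, proj z ∈ 𝒳 ∧ ∀ w ∈ 𝒳, ‖z - proj z‖ ≤ ‖z - w‖)
    (α : ℕ → ℝ) (hα : ∀ t, 0 < α t)
    (y : ℕ → Fin N → ℝ)
    (x : ℕ → EuclideanSpace ℝ (Fin d)) (hx0 : x 0 = x₀)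
    (hxrec : ∀ t : ℕ, x (t + 1) = proj (x t + (α t / (N : ℝ)) •
      ∑ j, Real.sign (y t j - ⟪a j, x t⟫) • a j)) :
    ∀ k n : ℕ, k ≤ n →
      (∑ t ∈ Finset.Icc k n, α t) *
        ((1 / (N : ℝ)) * ∑ j, |(⟪a j,
            ((∑ t ∈ Finset.Icc k n, α t)⁻¹ • ∑ t ∈ Finset.Icc k n, α t • x t) - μ⟫ : ℝ)|) ≤
      K * (2 * D ^ 2 + ∑ t ∈ Finset.Icc k n,
        ((2 * α t / (N : ℝ)) * ∑ j ∈ 𝒜ᶜ, |y t j - (⟪a j, μ⟫ : ℝ)|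
          + α t ^ 2 * Abar ^ 2 / 2)) := by
  have hN0 : (0 : ℝ) < N := by exact_mod_cast hN
  have haj : ∀ j, ‖a j‖ ≤ Abar := fun j => hAbar.2 ⟨j, rfl⟩
  have hA0 : 0 ≤ Abar := (norm_nonneg _).trans (haj ⟨0, hN⟩)
  have hη0 : 0 < η := by
    obtain ⟨S, hS, u, hu, h⟩ := hη.1
    have hu0 : u ≠ 0 := by rintro rfl; simp at hu
    rw [h]
    exact mul_pos (by positivity) (sub_pos.2 (hA2 u hu0 S hS))
  set G : EuclideanSpace ℝ (Fin d) → ℝ := fun v =>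
    (1 / N) * (∑ j ∈ 𝒜ᶜ, |(⟪a j, v⟫ : ℝ)| - ∑ j ∈ 𝒜, |(⟪a j, v⟫ : ℝ)|) with hG
  have hGη : ∀ v, η * ‖v‖ ≤ G v := by
    intro v
    by_cases hv : v = 0
    · simp [hv, hG]
    have hv0 : 0 < ‖v‖ := norm_pos_iff.2 hv
    have h1 : η ≤ G (‖v‖⁻¹ • v) :=
      hη.2 ⟨𝒜, h𝒜, ‖v‖⁻¹ • v, norm_smul_inv_norm hv, rfl⟩
    have h2 : G (‖v‖⁻¹ • v) = ‖v‖⁻¹ * G v := by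
      simp only [hG, inner_smul_right, abs_mul, abs_inv, abs_norm, ← Finset.mul_sum]
      ring
    rw [h2, inv_mul_eq_div, le_div_iff₀ hv0] at h1
    exact h1
  have hfG : ∀ v, (1 / (N : ℝ)) * ∑ j, |(⟪a j, v⟫ : ℝ)| ≤ K * G v := by
    intro v
    have h1 : ∑ j ∈ 𝒜, |(⟪a j, v⟫ : ℝ)| ≤ m * (Abar * ‖v‖) := by
      rw [← h𝒜, ← nsmul_eq_mul]
      exact Finset.sum_le_card_nsmul _ _ _ fun j _ =>
        (abs_real_inner_le_norm _ _).trans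
          (mul_le_mul_of_nonneg_right (haj j) (norm_nonneg _))
    have h2 : (1 / (N : ℝ)) * ∑ j, |(⟪a j, v⟫ : ℝ)|
        = G v + (2 / N) * ∑ j ∈ 𝒜, |(⟪a j, v⟫ : ℝ)| := by
      rw [← Finset.sum_add_sum_compl 𝒜]
      simp only [hG]
      ring
    have h3 : (2 / (N : ℝ)) * (m * (Abar * ‖v‖)) = 2 * m * Abar / (N * η) * (η * ‖v‖) := by
      field_simp
    have h4 := mul_le_mul_of_nonneg_left h1 (show 0 ≤ 2 / (N : ℝ) by positivity)
    have h5 := mul_le_mul_of_nonneg_left (hGη v)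
      (show 0 ≤ 2 * m * Abar / (N * η) by positivity)
    rw [h2, hK]
    linarith
  have hK0 : 0 ≤ K := by rw [hK]; positivity
  have hstep : ∀ t, α t * G (x t - μ) ≤ ‖x t - μ‖ ^ 2 / 2 - ‖x (t + 1) - μ‖ ^ 2 / 2 +
      ((2 * α t / (N : ℝ)) * ∑ j ∈ 𝒜ᶜ, |y t j - (⟪a j, μ⟫ : ℝ)|
          + α t ^ 2 * Abar ^ 2 / 2) := by
    intro t
    set g := ∑ j, Real.sign (y t j - ⟪a j, x t⟫) • a j with hg
    have hgn : ‖g‖ ≤ N * Abar := by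
      calc ‖g‖ ≤ ∑ j : Fin N, Abar := by
            refine norm_sum_le_of_le _ fun j _ => ?_
            rw [norm_smul]
            have : ‖Real.sign (y t j - ⟪a j, x t⟫)‖ ≤ 1 := by
              rcases Real.sign_apply_eq (y t j - ⟪a j, x t⟫) with h | h | h <;> rw [h] <;> simp
            calc _ ≤ 1 * ‖a j‖ := mul_le_mul_of_nonneg_right this (norm_nonneg _)
              _ ≤ Abar := by rw [one_mul]; exact haj j
        _ = N * Abar := by simp
    have hgi : ⟪g, x t - μ⟫ ≤ 2 * ∑ j ∈ 𝒜ᶜ, |y t j - (⟪a j, μ⟫ : ℝ)| - N * G (x t - μ) := by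
      have e1 : ⟪g, x t - μ⟫ = ∑ j, Real.sign (y t j - ⟪a j, x t⟫) * ⟪a j, x t - μ⟫ := by
        simp only [hg, sum_inner, real_inner_smul_left]
      have e2 : ∑ j ∈ 𝒜, Real.sign (y t j - ⟪a j, x t⟫) * ⟪a j, x t - μ⟫ ≤
          ∑ j ∈ 𝒜, |(⟪a j, x t - μ⟫ : ℝ)| := Finset.sum_le_sum fun j _ => sign_mul_le_abs _ _
      have e3 : ∑ j ∈ 𝒜ᶜ, Real.sign (y t j - ⟪a j, x t⟫) * ⟪a j, x t - μ⟫ ≤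
          ∑ j ∈ 𝒜ᶜ, (2 * |y t j - (⟪a j, μ⟫ : ℝ)| - |(⟪a j, x t - μ⟫ : ℝ)|) := by
        refine Finset.sum_le_sum fun j _ => ?_
        have h := sign_sub_mul_le (y t j - ⟪a j, μ⟫) ⟪a j, x t - μ⟫
        have h' : y t j - ⟪a j, μ⟫ - ⟪a j, x t - μ⟫ = y t j - ⟪a j, x t⟫ := by
          rw [inner_sub_right]; ring
        rwa [h'] at h
      rw [Finset.sum_sub_distrib, ← Finset.mul_sum] at e3
      have e4 : N * G (x t - μ) =
          ∑ j ∈ 𝒜ᶜ, |(⟪a j, x t - μ⟫ : ℝ)| - ∑ j ∈ 𝒜, |(⟪a j, x t - μ⟫ : ℝ)| := by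
        simp only [hG]
        field_simp
      rw [e1, e4, ← Finset.sum_add_sum_compl 𝒜]
      linarith
    have hc : 0 ≤ α t / N := (div_pos (hα t) hN0).le
    have hle : ‖x (t + 1) - μ‖ ≤ ‖(x t - μ) + (α t / (N : ℝ)) • g‖ := by
      have h := norm_proj_sub_le h𝒳conv (hproj (x t + (α t / (N : ℝ)) • g)).1
        (hproj (x t + (α t / (N : ℝ)) • g)).2 hμ
      rw [← hxrec, add_sub_right_comm] at h
      exact h
    have hsq := pow_le_pow_left₀ (norm_nonneg _) hle 2
    rw [norm_add_sq_real, inner_smul_right, norm_smul, real_inner_comm,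
      Real.norm_of_nonneg hc] at hsq
    have hlast : (α t / N * ‖g‖) ^ 2 ≤ α t ^ 2 * Abar ^ 2 := by
      have h := mul_le_mul_of_nonneg_left hgn hc
      have h' : α t / N * (N * Abar) = α t * Abar := by field_simp
      rw [h'] at h
      rw [← mul_pow]
      exact pow_le_pow_left₀ (by positivity) h 2
    have hmid := mul_le_mul_of_nonneg_left hgi hc
    have hrw : α t / N * (2 * ∑ j ∈ 𝒜ᶜ, |y t j - (⟪a j, μ⟫ : ℝ)| - N * G (x t - μ)) =
        (2 * α t / (N : ℝ)) * ∑ j ∈ 𝒜ᶜ, |y t j - (⟪a j, μ⟫ : ℝ)| - α t * G (x t - μ) := by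
      field_simp
    rw [hrw] at hmid
    linarith
  intro k n hkn
  have htel : ∑ t ∈ Finset.Icc k n, α t * G (x t - μ) ≤ 2 * D ^ 2 + ∑ t ∈ Finset.Icc k n,
        ((2 * α t / (N : ℝ)) * ∑ j ∈ 𝒜ᶜ, |y t j - (⟪a j, μ⟫ : ℝ)|
          + α t ^ 2 * Abar ^ 2 / 2) := by
    refine (Finset.sum_le_sum fun t _ => hstep t).trans ?_
    rw [Finset.sum_add_distrib]
    have hs : ∑ t ∈ Finset.Icc k n, (‖x t - μ‖ ^ 2 / 2 - ‖x (t + 1) - μ‖ ^ 2 / 2) =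
        ‖x k - μ‖ ^ 2 / 2 - ‖x (n + 1) - μ‖ ^ 2 / 2 := by
      have h := Finset.sum_Ico_sub (fun t => ‖x t - μ‖ ^ 2 / 2) (show k ≤ n + 1 by omega)
      rw [← Finset.Ico_add_one_right_eq_Icc, ← neg_inj, ← Finset.sum_neg_distrib]
      simpa only [neg_sub] using h
    have hxk : x k ∈ 𝒳 := by
      cases k with
      | zero => rw [hx0]; exact hx₀
      | succ k => rw [hxrec]; exact (hproj _).1
    have hd1 : ‖x k - x₀‖ ≤ D := hD.2 ⟨_, hxk, rfl⟩
    have hd2 : ‖μ - x₀‖ ≤ D := hD.2 ⟨_, hμ, rfl⟩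
    have hd3 : ‖x k - μ‖ ≤ 2 * D := by
      have := norm_sub_le (x k - x₀) (μ - x₀)
      rw [sub_sub_sub_cancel_right] at this
      linarith
    have hd4 := pow_le_pow_left₀ (norm_nonneg _) hd3 2
    have hd5 := sq_nonneg ‖x (n + 1) - μ‖
    rw [hs]
    linarith
  have hSpos : 0 < ∑ t ∈ Finset.Icc k n, α t :=
    Finset.sum_pos (fun t _ => hα t) (Finset.nonempty_Icc.2 hkn)
  -- Jensen's inequality for `f`, one coordinate at a time.
  have hconv : (∑ t ∈ Finset.Icc k n, α t) *
        ((1 / (N : ℝ)) * ∑ j, |(⟪a j,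
            ((∑ t ∈ Finset.Icc k n, α t)⁻¹ • ∑ t ∈ Finset.Icc k n, α t • x t) - μ⟫ : ℝ)|) ≤
      ∑ t ∈ Finset.Icc k n, α t * ((1 / (N : ℝ)) * ∑ j, |(⟪a j, x t - μ⟫ : ℝ)|) := by
    set S := ∑ t ∈ Finset.Icc k n, α t with hS
    have hj : ∀ j, S * |(⟪a j, (S⁻¹ • ∑ t ∈ Finset.Icc k n, α t • x t) - μ⟫ : ℝ)| ≤
        ∑ t ∈ Finset.Icc k n, α t * |(⟪a j, x t - μ⟫ : ℝ)| := by
      intro j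
      have h1 : S * ⟪a j, (S⁻¹ • ∑ t ∈ Finset.Icc k n, α t • x t) - μ⟫ =
          ∑ t ∈ Finset.Icc k n, α t * ⟪a j, x t - μ⟫ := by
        simp only [inner_sub_right, inner_smul_right, inner_sum, mul_sub,
          Finset.sum_sub_distrib, ← Finset.sum_mul, ← hS]
        rw [mul_inv_cancel_left₀ hSpos.ne']
      rw [← abs_of_pos hSpos, ← abs_mul, abs_of_pos hSpos, h1]
      refine (Finset.abs_sum_le_sum_abs _ _).trans (le_of_eq ?_)
      exact Finset.sum_congr rfl fun t _ => by rw [abs_mul, abs_of_pos (hα t)]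
    calc _ = (1 / (N : ℝ)) * ∑ j, S *
            |(⟪a j, (S⁻¹ • ∑ t ∈ Finset.Icc k n, α t • x t) - μ⟫ : ℝ)| := by
          rw [← Finset.mul_sum]; ring
      _ ≤ (1 / (N : ℝ)) * ∑ j, ∑ t ∈ Finset.Icc k n, α t * |(⟪a j, x t - μ⟫ : ℝ)| :=
          mul_le_mul_of_nonneg_left (Finset.sum_le_sum fun j _ => hj j) (by positivity)
      _ = _ := by
          rw [Finset.sum_comm, Finset.mul_sum]
          refine Finset.sum_congr rfl fun t _ => ?_
          rw [← Finset.mul_sum]; ring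
  refine hconv.trans (le_trans ?_ (mul_le_mul_of_nonneg_left htel hK0))
  rw [Finset.mul_sum]
  refine Finset.sum_le_sum fun t _ => ?_
  have := mul_le_mul_of_nonneg_left (hfG (x t - μ)) (hα t).le
  linarith
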